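/- For every r with 3/8 ≤ r ≤ 3/2 and every α > 0 there exists a constant C = C(α, r) > 0 such that for all smooth mean-free divergence-free vector fields u on T³ and all smooth mean-free vector fields v on T³ one has |b(u, (I + α^{2r} A^r)^{−1} v, u)| ≤ C ‖u‖_{H^r}² ‖v‖_{H¹}. -/

import Mathlib

open MeasureTheory

noncomputable section

/-- A vector field on `ℝ³` is `ℤ³`-periodic (i.e. lives on the torus `T³`). -/
def IsPeriodicVF (u : (Fin 3 → ℝ) → (Fin 3 → ℝ)) : Prop :=
  ∀ (x : Fin 3 → ℝ) (m : Fin 3 → ℤ), u (x + fun i => (m i : ℝ)) = u x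

/-- A vector field has zero mean over the fundamental domain `[0,1]³`. -/
def IsMeanFree (u : (Fin 3 → ℝ) → (Fin 3 → ℝ)) : Prop :=
  ∫ x in Set.Icc (0 : Fin 3 → ℝ) 1, u x = 0

/-- A vector field is divergence-free: `∑ i, ∂ᵢ uᵢ = 0`. -/
def IsDivFree (u : (Fin 3 → ℝ) → (Fin 3 → ℝ)) : Prop :=
  ∀ x : Fin 3 → ℝ, ∑ i, fderiv ℝ u x (Pi.single i 1) i = 0

/-- The `k`-th Fourier coefficient `û(k) = ∫_{[0,1]³} u(x) e^{-2πi k·x} dx` (componentwise). -/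
def fourierCoeffVF (u : (Fin 3 → ℝ) → (Fin 3 → ℝ)) (k : Fin 3 → ℤ) : Fin 3 → ℂ :=
  fun j => ∫ x in Set.Icc (0 : Fin 3 → ℝ) 1,
    (u x j : ℂ) * Complex.exp (-(2 * Real.pi * Complex.I) * ∑ i, (k i : ℂ) * (x i : ℂ))

/-- The squared Euclidean length of a Fourier coefficient vector. -/
def fcNormSq (u : (Fin 3 → ℝ) → (Fin 3 → ℝ)) (k : Fin 3 → ℤ) : ℝ :=
  ∑ j, Complex.normSq (fourierCoeffVF u k j)

/-- The spectral weight `|2πk|^{2s}`. -/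
def specWeight (s : ℝ) (k : Fin 3 → ℤ) : ℝ :=
  ((2 * Real.pi) ^ 2 * ∑ i, ((k i : ℝ)) ^ 2) ^ s

/-- The Sobolev `H^s` norm: `‖u‖_{H^s}² = ∑_{k ≠ 0} |2πk|^{2s} |û(k)|²`. -/
def hsNorm (s : ℝ) (u : (Fin 3 → ℝ) → (Fin 3 → ℝ)) : ℝ :=
  Real.sqrt (∑' k : Fin 3 → ℤ, if k = 0 then 0 else specWeight s k * fcNormSq u k)

/-- The trilinear form `b(u,v,w) = ∑_{i,j} ∫_{[0,1]³} uᵢ (∂ᵢ vⱼ) wⱼ dx`. -/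
def bform (u v w : (Fin 3 → ℝ) → (Fin 3 → ℝ)) : ℝ :=
  ∑ i, ∑ j, ∫ x in Set.Icc (0 : Fin 3 → ℝ) 1,
    u x i * fderiv ℝ v x (Pi.single i 1) j * w x j

/-- Smooth, periodic, mean-free vector field on the torus. -/
def IsSmoothTorusVF (u : (Fin 3 → ℝ) → (Fin 3 → ℝ)) : Prop :=
  ContDiff ℝ (⊤ : ℕ∞) u ∧ IsPeriodicVF u ∧ IsMeanFree u

end

section FourierPart

open Set
open scoped ComplexConjugate ENNReal

noncomputable local instance instMSUAC : MeasureSpace UnitAddCircle := ⟨AddCircle.haarAddCircle⟩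

local instance instHaarUAC : Measure.IsAddHaarMeasure (volume : Measure UnitAddCircle) :=
  inferInstanceAs (Measure.IsAddHaarMeasure AddCircle.haarAddCircle)

local instance instProbUAC : IsProbabilityMeasure (volume : Measure UnitAddCircle) :=
  inferInstanceAs (IsProbabilityMeasure AddCircle.haarAddCircle)

/-- The exponential `e^{-2πi k·x}`. -/
noncomputable def eneg (k : Fin 3 → ℤ) (x : Fin 3 → ℝ) : ℂ :=
  Complex.exp (-(2 * Real.pi * Complex.I) * ∑ i, (k i : ℂ) * (x i : ℂ))

/-- Scalar Fourier coefficient. -/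
noncomputable def sfc (f : (Fin 3 → ℝ) → ℂ) (k : Fin 3 → ℤ) : ℂ :=
  ∫ x in Set.Icc (0 : Fin 3 → ℝ) 1, f x * eneg k x

/-- Periodic scalar functions. -/
def PerC (f : (Fin 3 → ℝ) → ℂ) : Prop :=
  ∀ (x : Fin 3 → ℝ) (m : Fin 3 → ℤ), f (x + fun i => (m i : ℝ)) = f x

theorem exists_lift (f : (Fin 3 → ℝ) → ℂ) (hf : Continuous f) (hp : PerC f) :
    ∃ F : C(UnitAddTorus (Fin 3), ℂ), ∀ x : Fin 3 → ℝ, F (fun i => (x i : UnitAddCircle)) = f x := by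
  have hq : IsOpenQuotientMap (Pi.map (fun (_ : Fin 3) (t : ℝ) => (t : UnitAddCircle))) :=
    IsOpenQuotientMap.piMap (fun _ => QuotientAddGroup.isOpenQuotientMap_mk)
  have key : ∀ x y : Fin 3 → ℝ, Pi.map (fun (_ : Fin 3) (t : ℝ) => (t : UnitAddCircle)) x
      = Pi.map (fun (_ : Fin 3) (t : ℝ) => (t : UnitAddCircle)) y → f x = f y := by
    intro x y h
    have h2 : ∀ i, ∃ n : ℤ, y i = x i + n := by
      intro i
      have h3 := congrFun h i
      simp only [Pi.map_apply] at h3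
      obtain ⟨n, hn⟩ := AddSubgroup.mem_zmultiples_iff.1 (QuotientAddGroup.eq.1 h3)
      refine ⟨n, ?_⟩
      simp only [zsmul_eq_mul, mul_one] at hn
      linarith
    choose m hm using h2
    rw [← hp x m]
    congr 1
    ext i
    simp [hm]
  refine ⟨⟨fun z => f (Function.surjInv hq.surjective z), ?_⟩, ?_⟩
  · rw [hq.isQuotientMap.continuous_iff]
    convert hf using 1
    ext x
    exact key _ _ (Function.surjInv_eq hq.surjective _)
  · intro x
    exact key _ _ (Function.surjInv_eq hq.surjective (fun i => (x i : UnitAddCircle)))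

theorem ae_box : {x : Fin 3 → ℝ | ∀ i, x i ∈ Ioc ((0 : Fin 3 → ℝ) i) ((0 : Fin 3 → ℝ) i + 1)}
    =ᵐ[volume] Icc (0 : Fin 3 → ℝ) 1 := by
  have := Measure.univ_pi_Ioc_ae_eq_Icc (μ := fun _ : Fin 3 => (volume : Measure ℝ)) (f := 0) (g := 1)
  rw [volume_pi]
  have e : {x : Fin 3 → ℝ | ∀ i, x i ∈ Ioc ((0 : Fin 3 → ℝ) i) ((0 : Fin 3 → ℝ) i + 1)}
      = Set.univ.pi fun i => Ioc ((0 : Fin 3 → ℝ) i) ((1 : Fin 3 → ℝ) i) := by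
    ext x
    simp [Set.mem_pi]
  rw [e]
  exact this

theorem lift_integral (F : UnitAddTorus (Fin 3) → ℂ) :
    ∫ z, F z = ∫ x in Icc (0 : Fin 3 → ℝ) 1, F (fun i => (x i : UnitAddCircle)) := by
  rw [UnitAddTorus.integral_preimage F 0]
  exact setIntegral_congr_set ae_box

theorem mFourier_eneg (k : Fin 3 → ℤ) (x : Fin 3 → ℝ) :
    UnitAddTorus.mFourier (-k) (fun i => (x i : UnitAddCircle)) = eneg k x := by
  simp only [UnitAddTorus.mFourier, ContinuousMap.coe_mk, eneg, fourier_coe_apply]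
  rw [← Complex.exp_sum, Finset.mul_sum]
  congr 1
  refine Finset.sum_congr rfl fun i _ => ?_
  simp
  ring

theorem parseval (f g : (Fin 3 → ℝ) → ℂ) (hf : Continuous f) (hg : Continuous g)
    (pf : PerC f) (pg : PerC g) :
    HasSum (fun k => conj (sfc f k) * sfc g k)
      (∫ x in Icc (0 : Fin 3 → ℝ) 1, conj (f x) * g x) := by
  obtain ⟨F, hF⟩ := exists_lift f hf pf
  obtain ⟨G, hG⟩ := exists_lift g hg pg
  have h := UnitAddTorus.hasSum_prod_mFourierCoeff (F.toLp 2 volume ℂ) (G.toLp 2 volume ℂ)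
  have e : ∫ t, conj (F.toLp 2 volume ℂ t) * (G.toLp 2 volume ℂ t) =
      ∫ t, conj (F t) * G t := by
    apply integral_congr_ae
    filter_upwards [ContinuousMap.coeFn_toLp (p := 2) (𝕜 := ℂ) volume F,
      ContinuousMap.coeFn_toLp (p := 2) (𝕜 := ℂ) volume G] with t h1 h2
    rw [h1, h2]
  have c : ∀ (f : (Fin 3 → ℝ) → ℂ) (F : C(UnitAddTorus (Fin 3), ℂ)),
      (∀ x : Fin 3 → ℝ, F (fun i => (x i : UnitAddCircle)) = f x) → ∀ k,
      UnitAddTorus.mFourierCoeff (F.toLp 2 volume ℂ) k = sfc f k := by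
    intro f F hF k
    rw [UnitAddTorus.mFourierCoeff_toLp, UnitAddTorus.mFourierCoeff, lift_integral, sfc]
    simp only [mFourier_eneg, hF, smul_eq_mul, mul_comm]
  rw [e, lift_integral] at h
  simpa only [c f F hF, c g G hG, hF, hG] using h


theorem integral_fderiv_eq_zero (f : (Fin 3 → ℝ) → ℂ) (hf : ContDiff ℝ 1 f) (hp : PerC f)
    (i : Fin 3) : ∫ x in Icc (0 : Fin 3 → ℝ) 1, fderiv ℝ f x (Pi.single i 1) = 0 := by
  have hc : Continuous fun x => fderiv ℝ f x (Pi.single i 1) :=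
    (hf.continuous_fderiv one_ne_zero).clm_apply continuous_const
  have hs : ∀ x, ∑ j, (if j = i then fderiv ℝ f x else 0) (Pi.single j 1)
      = fderiv ℝ f x (Pi.single i 1) := by
    intro x
    rw [Finset.sum_eq_single i]
    · simp
    · intro j _ hj
      simp [hj]
    · simp
  have h := integral_divergence_of_hasFDerivAt_off_countable' (n := 2) (E := ℂ)
    (0 : Fin 3 → ℝ) 1 zero_le_one (fun j x => if j = i then f x else 0)
    (fun j x => if j = i then fderiv ℝ f x else 0) ∅ countable_empty
    (fun j => by
      split_ifs
      · exact hf.continuous.continuousOn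
      · exact continuousOn_const)
    (fun x _ j => by
      split_ifs
      · exact (hf.differentiable one_ne_zero x).hasFDerivAt
      · exact hasFDerivAt_const _ _)
    (by
      simp only [hs]
      exact hc.continuousOn.integrableOn_compact isCompact_Icc)
  simp only [hs] at h
  rw [h]
  refine Finset.sum_eq_zero fun j _ => ?_
  rw [sub_eq_zero]
  congr 1
  ext x
  by_cases hj : j = i
  · simp only [hj, if_true]
    refine Eq.trans ?_ (hp _ (Pi.single i 1))
    congr 1
    ext l
    refine Fin.succAboveCases i ?_ (fun l => ?_) l
    · simp
    · simp
  · simp [hj]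

theorem hasFDerivAt_eneg (k : Fin 3 → ℤ) (x : Fin 3 → ℝ) :
    HasFDerivAt (eneg k) (eneg k x • ((-(2 * Real.pi * Complex.I)) • ∑ i, (k i : ℂ) •
      (Complex.ofRealCLM.comp (ContinuousLinearMap.proj (R := ℝ) (φ := fun _ : Fin 3 => ℝ) i)))) x := by
  have h1 : HasFDerivAt (fun x : Fin 3 → ℝ => ∑ i, (k i : ℂ) * (x i : ℂ)) (∑ i, (k i : ℂ) •
      (Complex.ofRealCLM.comp (ContinuousLinearMap.proj (R := ℝ) (φ := fun _ : Fin 3 => ℝ) i))) x := by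
    apply HasFDerivAt.fun_sum
    intro i _
    exact ((Complex.ofRealCLM.comp (ContinuousLinearMap.proj (R := ℝ)
      (φ := fun _ : Fin 3 => ℝ) i)).hasFDerivAt).const_mul _
  exact (h1.const_mul (-(2 * Real.pi * Complex.I))).cexp

theorem fderiv_eneg (k : Fin 3 → ℤ) (x : Fin 3 → ℝ) (i : Fin 3) :
    fderiv ℝ (eneg k) x (Pi.single i 1) = -(2 * Real.pi * Complex.I * k i) * eneg k x := by
  rw [(hasFDerivAt_eneg k x).fderiv]
  simp [Pi.single_apply, apply_ite Complex.ofReal]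
  ring

theorem contDiff_eneg (k : Fin 3 → ℤ) (n : WithTop ℕ∞) : ContDiff ℝ n (eneg k) := by
  unfold eneg
  apply ContDiff.cexp
  apply ContDiff.mul contDiff_const
  apply ContDiff.sum
  intro i _
  exact contDiff_const.mul (Complex.ofRealCLM.contDiff.comp (contDiff_apply ℝ ℝ i))

theorem perC_eneg (k : Fin 3 → ℤ) : PerC (eneg k) := by
  intro x m
  unfold eneg
  rw [Complex.exp_eq_exp_iff_exists_int]
  refine ⟨-∑ i, k i * m i, ?_⟩
  simp only [Pi.add_apply, Complex.ofReal_add, mul_add, Finset.sum_add_distrib]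
  push_cast
  ring

theorem eneg_add (k l : Fin 3 → ℤ) (x : Fin 3 → ℝ) : eneg (k + l) x = eneg k x * eneg l x := by
  unfold eneg
  rw [← Complex.exp_add, ← mul_add, ← Finset.sum_add_distrib]
  simp [add_mul]

theorem PerC.mul {f g : (Fin 3 → ℝ) → ℂ} (hf : PerC f) (hg : PerC g) :
    PerC (fun x => f x * g x) := fun x m => by simp only [hf x m, hg x m]

theorem PerC.fderiv {f : (Fin 3 → ℝ) → ℂ} (hf : PerC f) (e : Fin 3 → ℝ) :
    PerC (fun x => fderiv ℝ f x e) := by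
  intro x m
  have : f = fun y => f (y + fun i => (m i : ℝ)) := by
    ext y
    rw [hf y m]
  change _root_.fderiv ℝ f (x + fun i => (m i : ℝ)) e = _root_.fderiv ℝ f x e
  conv_rhs => rw [this]
  rw [fderiv_comp_add_right]

theorem sfc_fderiv (f : (Fin 3 → ℝ) → ℂ) (hf : ContDiff ℝ 1 f) (hp : PerC f)
    (i : Fin 3) (k : Fin 3 → ℤ) :
    sfc (fun x => fderiv ℝ f x (Pi.single i 1)) k = (2 * Real.pi * Complex.I * k i) * sfc f k := by
  have h := integral_fderiv_eq_zero (fun x => f x * eneg k x) (hf.mul (contDiff_eneg k 1))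
    (hp.mul (perC_eneg k)) i
  have hc : Continuous fun x => fderiv ℝ f x (Pi.single i 1) :=
    (hf.continuous_fderiv one_ne_zero).clm_apply continuous_const
  have hec : Continuous (eneg k) := (contDiff_eneg k 1).continuous
  have e : ∀ x, fderiv ℝ (fun x => f x * eneg k x) x (Pi.single i 1)
      = fderiv ℝ f x (Pi.single i 1) * eneg k x
        - (2 * Real.pi * Complex.I * k i) * (f x * eneg k x) := by
    intro x
    rw [fderiv_fun_mul (hf.differentiable one_ne_zero x)
      ((contDiff_eneg k 1).differentiable one_ne_zero x)]
    simp only [_root_.add_apply, _root_.smul_apply, fderiv_eneg,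
      smul_eq_mul]
    ring
  simp only [e] at h
  rw [integral_sub] at h
  · rw [integral_const_mul, sub_eq_zero] at h
    exact h
  · exact (hc.mul hec).continuousOn.integrableOn_compact isCompact_Icc
  · exact (continuous_const.mul (hf.continuous.mul hec)).continuousOn.integrableOn_compact
      isCompact_Icc

theorem summable_sq (f : (Fin 3 → ℝ) → ℂ) (hf : Continuous f) (hp : PerC f) :
    Summable fun k => ‖sfc f k‖ ^ 2 := by
  have h := (parseval f f hf hf hp hp).summable.norm
  simpa [← sq] using h

/-- The spectral weight `|2πk|²`. -/
noncomputable def WW (k : Fin 3 → ℤ) : ℝ := (2 * Real.pi) ^ 2 * ∑ i, ((k i : ℝ)) ^ 2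

theorem summable_WW (f : (Fin 3 → ℝ) → ℂ) (hf : ContDiff ℝ 2 f) (hp : PerC f) :
    Summable fun k => WW k ^ 2 * ‖sfc f k‖ ^ 2 := by
  have h1 : ∀ i, ContDiff ℝ 1 (fun x => fderiv ℝ f x (Pi.single i 1)) := fun i =>
    (hf.fderiv_right (m := 1) (by norm_num)).clm_apply contDiff_const
  have h2 : ∀ i : Fin 3, Summable fun k : Fin 3 → ℤ => ((2 * Real.pi) * (k i : ℝ)) ^ 4 * ‖sfc f k‖ ^ 2 := by
    intro i
    have hc : Continuous fun x => fderiv ℝ (fun x => fderiv ℝ f x (Pi.single i 1)) x (Pi.single i 1) :=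
      ((h1 i).continuous_fderiv one_ne_zero).clm_apply continuous_const
    have h3 := summable_sq _ hc ((hp.fderiv (Pi.single i 1)).fderiv (Pi.single i 1))
    refine h3.congr fun k => ?_
    rw [sfc_fderiv _ (h1 i) (hp.fderiv _), sfc_fderiv _ (hf.of_le (by norm_num)) hp]
    simp only [norm_mul, Complex.norm_real, Complex.norm_I, Complex.norm_intCast,
      Complex.norm_ofNat, Real.norm_eq_abs, mul_one, abs_of_pos Real.pi_pos]
    have : |(k i : ℝ)| ^ 4 = (k i : ℝ) ^ 4 := by
      rw [show (4 : ℕ) = 2 * 2 from rfl, pow_mul, sq_abs, ← pow_mul]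
    rw [mul_pow (2 * Real.pi), ← this]
    ring
  have h4 := (summable_sum (s := Finset.univ) fun i _ => h2 i).mul_left 3
  refine Summable.of_nonneg_of_le (fun k => by positivity) (fun k => ?_) h4
  rw [← Finset.sum_mul, ← mul_assoc]
  gcongr
  simp only [WW, Fin.sum_univ_three]
  have : 0 ≤ (2 * Real.pi) ^ 4 := by positivity
  have h5 : ((k 0 : ℝ) ^ 2 + (k 1 : ℝ) ^ 2 + (k 2 : ℝ) ^ 2) ^ 2
      ≤ 3 * ((k 0 : ℝ) ^ 4 + (k 1 : ℝ) ^ 4 + (k 2 : ℝ) ^ 4) := by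
    nlinarith [sq_nonneg ((k 0 : ℝ) ^ 2 - (k 1 : ℝ) ^ 2), sq_nonneg ((k 0 : ℝ) ^ 2 - (k 2 : ℝ) ^ 2),
      sq_nonneg ((k 1 : ℝ) ^ 2 - (k 2 : ℝ) ^ 2)]
  nlinarith [mul_le_mul_of_nonneg_left h5 this]

/-- Trilinear bound by the Fourier coefficients. -/
theorem enorm_integral_triple_le (F f g : (Fin 3 → ℝ) → ℝ) (hF : Continuous F) (hf : Continuous f)
    (hg : Continuous g) (pF : PerC fun x => (F x : ℂ)) (pf : PerC fun x => (f x : ℂ))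
    (pg : PerC fun x => (g x : ℂ)) :
    ‖∫ x in Icc (0 : Fin 3 → ℝ) 1, f x * F x * g x‖ₑ ≤
      ∑' k, ∑' l, ‖sfc (fun x => (F x : ℂ)) k‖ₑ * ‖sfc (fun x => (f x : ℂ)) l‖ₑ *
        ‖sfc (fun x => (g x : ℂ)) (k + l)‖ₑ := by
  have cF : Continuous fun x => (F x : ℂ) := Complex.continuous_ofReal.comp hF
  have cf : Continuous fun x => (f x : ℂ) := Complex.continuous_ofReal.comp hf
  have cg : Continuous fun x => (g x : ℂ) := Complex.continuous_ofReal.comp hg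
  have h1 := parseval _ (fun x => (f x : ℂ) * (g x : ℂ)) cF (cf.mul cg) pF (pf.mul pg)
  have h2 : ∀ k, ‖sfc (fun x => (f x : ℂ) * (g x : ℂ)) k‖ₑ ≤
      ∑' l, ‖sfc (fun x => (f x : ℂ)) l‖ₑ * ‖sfc (fun x => (g x : ℂ)) (k + l)‖ₑ := by
    intro k
    have h3 := parseval _ (fun x => (g x : ℂ) * eneg k x) cf (cg.mul (contDiff_eneg k 1).continuous) pf (pg.mul (perC_eneg k))
    have e1 : sfc (fun x => (f x : ℂ) * (g x : ℂ)) k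
        = ∫ x in Icc (0 : Fin 3 → ℝ) 1, conj (f x : ℂ) * ((g x : ℂ) * eneg k x) := by
      simp only [sfc, Complex.conj_ofReal, mul_assoc]
    have e2 : ∀ l, sfc (fun x => (g x : ℂ) * eneg k x) l = sfc (fun x => (g x : ℂ)) (k + l) := by
      intro l
      simp only [sfc, eneg_add, mul_assoc]
    rw [e1, ← h3.tsum_eq]
    refine enorm_tsum_le_tsum_enorm.trans (le_of_eq ?_)
    refine tsum_congr fun l => ?_
    rw [enorm_mul, e2, RCLike.enorm_conj]
  have e0 : ‖∫ x in Icc (0 : Fin 3 → ℝ) 1, f x * F x * g x‖ₑ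
      = ‖∫ x in Icc (0 : Fin 3 → ℝ) 1, conj (F x : ℂ) * ((f x : ℂ) * (g x : ℂ))‖ₑ := by
    have : ∫ x in Icc (0 : Fin 3 → ℝ) 1, conj (F x : ℂ) * ((f x : ℂ) * (g x : ℂ))
        = ((∫ x in Icc (0 : Fin 3 → ℝ) 1, f x * F x * g x : ℝ) : ℂ) := by
      rw [← integral_complex_ofReal]
      congr 1
      ext x
      simp only [Complex.conj_ofReal]
      push_cast
      ring
    rw [this]
    simp [enorm_eq_nnnorm]
  rw [e0, ← h1.tsum_eq]
  refine enorm_tsum_le_tsum_enorm.trans ?_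
  refine ENNReal.tsum_le_tsum fun k => ?_
  simp only [mul_assoc]
  rw [ENNReal.tsum_mul_left, enorm_mul, RCLike.enorm_conj]
  gcongr
  exact h2 k

end FourierPart

section Combinatorics

open scoped ENNReal

/-- Sup norm of a lattice point. -/
def nn (k : Fin 3 → ℤ) : ℕ := Finset.univ.sup fun i => (k i).natAbs

theorem natAbs_le_nn (k : Fin 3 → ℤ) (i : Fin 3) : (k i).natAbs ≤ nn k :=
  Finset.le_sup (f := fun i => (k i).natAbs) (Finset.mem_univ i)

theorem exists_nn (k : Fin 3 → ℤ) : ∃ i, nn k = (k i).natAbs := by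
  obtain ⟨i, _, hi⟩ := Finset.exists_mem_eq_sup Finset.univ Finset.univ_nonempty
    (fun i => (k i).natAbs)
  exact ⟨i, hi⟩

theorem nn_eq_zero {k : Fin 3 → ℤ} (h : nn k = 0) : k = 0 := by
  ext i
  have := natAbs_le_nn k i
  simp only [Pi.zero_apply]
  omega

theorem nn_add_le (k l : Fin 3 → ℤ) : nn (k + l) ≤ nn k + nn l := by
  obtain ⟨i, hi⟩ := exists_nn (k + l)
  have h1 := natAbs_le_nn k i
  have h2 := natAbs_le_nn l i
  rw [hi, Pi.add_apply]
  omega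

theorem nn_left_le (k l : Fin 3 → ℤ) : nn k ≤ nn (k + l) + nn l := by
  obtain ⟨i, hi⟩ := exists_nn k
  have h1 := natAbs_le_nn (k + l) i
  have h2 := natAbs_le_nn l i
  rw [Pi.add_apply] at h1
  omega

theorem nn_right_le (k l : Fin 3 → ℤ) : nn l ≤ nn (k + l) + nn k := by
  rw [add_comm k l]
  exact nn_left_le l k

/-- `n^{-3/8}` (zero at zero). -/
noncomputable def HH (n : ℕ) : ℝ := (n : ℝ) ^ (-(3 / 8) : ℝ)

theorem HH_zero : HH 0 = 0 := by
  unfold HH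
  rw [Nat.cast_zero, Real.zero_rpow (by norm_num)]

theorem HH_nonneg (n : ℕ) : 0 ≤ HH n := by
  unfold HH
  positivity

theorem HH_anti {a b : ℕ} (ha : 0 < a) (hab : a ≤ b) : HH b ≤ HH a := by
  unfold HH
  exact Real.rpow_le_rpow_of_nonpos (by positivity) (by exact_mod_cast hab) (by norm_num)

theorem HH_double {a b : ℕ} (ha : 0 < a) (hab : a ≤ 2 * b) : HH b ≤ 2 * HH a := by
  unfold HH
  have h1 : ((b : ℕ) : ℝ) ^ (-(3 / 8) : ℝ) ≤ ((a : ℝ) / 2) ^ (-(3 / 8) : ℝ) := by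
    apply Real.rpow_le_rpow_of_nonpos (by positivity) _ (by norm_num)
    have : (a : ℝ) ≤ 2 * b := by exact_mod_cast hab
    linarith
  refine h1.trans ?_
  rw [Real.div_rpow (by positivity) (by norm_num), Real.rpow_neg (by norm_num : (0:ℝ) ≤ 2),
    div_inv_eq_mul, mul_comm]
  gcongr
  calc (2 : ℝ) ^ (3 / 8 : ℝ) ≤ 2 ^ (1 : ℝ) :=
        Real.rpow_le_rpow_of_exponent_le (by norm_num) (by norm_num)
    _ = 2 := by norm_num

/-- The kernel. -/
noncomputable def BB (s t : Fin 3 → ℤ) : ℝ :=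
  if nn s ≤ nn t then HH (nn s) ^ 2 * HH (nn t) ^ 2 else 0

theorem BB_nonneg (s t : Fin 3 → ℤ) : 0 ≤ BB s t := by
  unfold BB
  split_ifs
  · positivity
  · exact le_rfl

theorem kernel_le (k l : Fin 3 → ℤ) :
    HH (nn k) ^ 2 * HH (nn l) * HH (nn (k + l)) ≤
      2 * (BB k (k + l) + BB l (k + l) + BB (k + l) k) := by
  have B1 := BB_nonneg k (k + l)
  have B2 := BB_nonneg l (k + l)
  have B3 := BB_nonneg (k + l) k
  rcases Nat.eq_zero_or_pos (nn k) with ha | ha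
  · rw [ha, HH_zero]
    simp only [ne_eq, OfNat.ofNat_ne_zero, not_false_eq_true, zero_pow, zero_mul]
    positivity
  rcases Nat.eq_zero_or_pos (nn l) with hb | hb
  · rw [hb, HH_zero]
    simp only [mul_zero, zero_mul]
    positivity
  rcases Nat.eq_zero_or_pos (nn (k + l)) with hc | hc
  · rw [hc, HH_zero]
    simp only [mul_zero]
    positivity
  have t1 := nn_add_le k l
  have t2 := nn_left_le k l
  have t3 := nn_right_le k l
  have p0 := HH_nonneg (nn k)
  have q0 := HH_nonneg (nn l)
  have r0 := HH_nonneg (nn (k + l))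
  by_cases h1 : nn k ≤ nn l ∧ nn k ≤ nn (k + l)
  · have e : BB k (k + l) = HH (nn k) ^ 2 * HH (nn (k + l)) ^ 2 := if_pos h1.2
    have h := HH_double hc (show nn (k + l) ≤ 2 * nn l by omega)
    have : HH (nn k) ^ 2 * HH (nn l) * HH (nn (k + l)) ≤
        HH (nn k) ^ 2 * (2 * HH (nn (k + l))) * HH (nn (k + l)) := by gcongr
    nlinarith
  by_cases h2 : nn l ≤ nn k ∧ nn l ≤ nn (k + l)
  · have e : BB l (k + l) = HH (nn l) ^ 2 * HH (nn (k + l)) ^ 2 := if_pos h2.2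
    have h := HH_double hc (show nn (k + l) ≤ 2 * nn k by omega)
    have h' := HH_anti hb h2.1
    have : HH (nn k) * HH (nn k) * HH (nn l) * HH (nn (k + l)) ≤
        HH (nn l) * (2 * HH (nn (k + l))) * HH (nn l) * HH (nn (k + l)) := by gcongr
    nlinarith
  · have h3 : nn (k + l) ≤ nn k := by omega
    have h4 : nn (k + l) ≤ nn l := by omega
    have e : BB (k + l) k = HH (nn (k + l)) ^ 2 * HH (nn k) ^ 2 := if_pos h3
    have h := HH_anti hc h4
    have : HH (nn k) ^ 2 * HH (nn l) * HH (nn (k + l)) ≤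
        HH (nn k) ^ 2 * HH (nn (k + l)) * HH (nn (k + l)) := by gcongr
    nlinarith [mul_nonneg (sq_nonneg (HH (nn k))) (sq_nonneg (HH (nn (k + l))))]

/-- `|j|^{-1/2}`, one at zero. -/
noncomputable def ph (j : ℤ) : ℝ := if j = 0 then 1 else (Real.sqrt (j.natAbs))⁻¹

theorem ph_nonneg (j : ℤ) : 0 ≤ ph j := by
  unfold ph
  split_ifs <;> positivity

theorem sum_ph (R : ℕ) : ∑ j ∈ Finset.Icc (-(R : ℤ)) R, ph j ≤ 1 + 4 * Real.sqrt R := by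
  induction R with
  | zero => simp [ph]
  | succ R ih =>
    have e : Finset.Icc (-((R + 1 : ℕ) : ℤ)) ((R + 1 : ℕ) : ℤ)
        = insert (-((R + 1 : ℕ) : ℤ)) (insert ((R + 1 : ℕ) : ℤ) (Finset.Icc (-(R : ℤ)) R)) := by
      ext j
      simp only [Finset.mem_Icc, Finset.mem_insert]
      omega
    rw [e, Finset.sum_insert, Finset.sum_insert]
    · have h1 : ph (-((R + 1 : ℕ) : ℤ)) = (Real.sqrt ((R + 1 : ℕ) : ℝ))⁻¹ := by
        unfold ph
        rw [if_neg (by omega), Int.natAbs_neg, Int.natAbs_natCast]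
      have h2 : ph ((R + 1 : ℕ) : ℤ) = (Real.sqrt ((R + 1 : ℕ) : ℝ))⁻¹ := by
        unfold ph
        rw [if_neg (by omega), Int.natAbs_natCast]
      rw [h1, h2]
      have s1 : Real.sqrt ((R + 1 : ℕ) : ℝ) ^ 2 = R + 1 := by
        rw [Real.sq_sqrt (by positivity)]
        push_cast
        ring
      have s2 : Real.sqrt (R : ℝ) ^ 2 = R := Real.sq_sqrt (by positivity)
      have p1 : 0 < Real.sqrt ((R + 1 : ℕ) : ℝ) := Real.sqrt_pos.2 (by positivity)
      have p2 : 0 ≤ Real.sqrt (R : ℝ) := Real.sqrt_nonneg _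
      have p3 : Real.sqrt (R : ℝ) ≤ Real.sqrt ((R + 1 : ℕ) : ℝ) :=
        Real.sqrt_le_sqrt (by push_cast; linarith)
      generalize Real.sqrt ((R + 1 : ℕ) : ℝ) = a at *
      generalize Real.sqrt (R : ℝ) = b at *
      have key : a⁻¹ ≤ 2 * (a - b) := by
        rw [inv_le_iff_one_le_mul₀ p1]
        nlinarith
      linarith
    · simp
    · simp only [Finset.mem_insert, Finset.mem_Icc]
      omega

theorem HH_pow (n : ℕ) : HH n ^ 4 = if n = 0 then 0 else (Real.sqrt n)⁻¹ ^ 3 := by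
  split_ifs with h
  · simp [h, HH_zero]
  · have hn : (0 : ℝ) < n := by positivity
    unfold HH
    rw [Real.sqrt_eq_rpow, ← Real.rpow_neg hn.le, ← Real.rpow_mul_natCast hn.le,
      ← Real.rpow_mul_natCast hn.le]
    norm_num

theorem HH_pow_le (s : Fin 3 → ℤ) : HH (nn s) ^ 4 ≤ ∏ i, ph (s i) := by
  rw [HH_pow]
  split_ifs with h
  · exact Finset.prod_nonneg fun i _ => ph_nonneg _
  · have : ∀ i, (Real.sqrt (nn s))⁻¹ ≤ ph (s i) := by
      intro i
      unfold ph
      have hn : (1 : ℝ) ≤ nn s := by exact_mod_cast Nat.one_le_iff_ne_zero.2 h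
      split_ifs with h0
      · exact inv_le_one_of_one_le₀ (Real.one_le_sqrt.2 hn)
      · have : 0 < (s i).natAbs := by omega
        have h2 : ((s i).natAbs : ℝ) ≤ nn s := by exact_mod_cast natAbs_le_nn s i
        have h3 : (0 : ℝ) < (s i).natAbs := by exact_mod_cast this
        gcongr
    calc (Real.sqrt (nn s))⁻¹ ^ 3 = ∏ i : Fin 3, (Real.sqrt (nn s))⁻¹ := by simp
      _ ≤ _ := Finset.prod_le_prod (fun i _ => by positivity) fun i _ => this i

theorem sum_BB (t : Fin 3 → ℤ) : ∑' s, ENNReal.ofReal (BB s t) ^ 2 ≤ 125 := by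
  rcases Nat.eq_zero_or_pos (nn t) with ht | ht
  · have : ∀ s, BB s t = 0 := by
      intro s
      unfold BB
      simp [ht, HH_zero]
    simp [this]
  set R := nn t with hR
  let S : Finset (Fin 3 → ℤ) := Fintype.piFinset fun _ => Finset.Icc (-(R : ℤ)) R
  have h0 : ∀ s ∉ S, ENNReal.ofReal (BB s t) ^ 2 = 0 := by
    intro s hs
    have : ¬ nn s ≤ nn t := by
      intro h
      apply hs
      simp only [S, Fintype.mem_piFinset, Finset.mem_Icc]
      intro i
      have := natAbs_le_nn s i
      omega
    simp [BB, this]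
  rw [tsum_eq_sum h0]
  have h1 : ∀ s, BB s t ^ 2 ≤ HH R ^ 4 * ∏ i, ph (s i) := by
    intro s
    unfold BB
    split_ifs
    · calc _ = HH R ^ 4 * HH (nn s) ^ 4 := by ring
        _ ≤ _ := mul_le_mul_of_nonneg_left (HH_pow_le s) (by positivity)
    · have := Finset.prod_nonneg (s := Finset.univ) fun i (_ : i ∈ Finset.univ) => ph_nonneg (s i)
      simp only [ne_eq, OfNat.ofNat_ne_zero, not_false_eq_true, zero_pow]
      positivity
  have h2 : ∑ s ∈ S, BB s t ^ 2 ≤ 125 := by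
    calc ∑ s ∈ S, BB s t ^ 2 ≤ ∑ s ∈ S, HH R ^ 4 * ∏ i, ph (s i) :=
          Finset.sum_le_sum fun s _ => h1 s
      _ = HH R ^ 4 * ∏ i : Fin 3, ∑ j ∈ Finset.Icc (-(R : ℤ)) R, ph j := by
          rw [← Finset.mul_sum, Finset.prod_univ_sum]
      _ = HH R ^ 4 * (∑ j ∈ Finset.Icc (-(R : ℤ)) R, ph j) ^ 3 := by simp
      _ ≤ HH R ^ 4 * (5 * Real.sqrt R) ^ 3 := by
          have hs : (1 : ℝ) ≤ Real.sqrt R := Real.one_le_sqrt.2 (by exact_mod_cast ht)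
          have := sum_ph R
          have h0 : 0 ≤ ∑ j ∈ Finset.Icc (-(R : ℤ)) R, ph j :=
            Finset.sum_nonneg fun j _ => ph_nonneg j
          gcongr
          linarith
      _ = 125 := by
          rw [HH_pow, if_neg (by omega)]
          have hs : (0 : ℝ) < Real.sqrt R := Real.sqrt_pos.2 (by exact_mod_cast ht)
          field_simp
          norm_num
  have e : ∑ s ∈ S, ENNReal.ofReal (BB s t) ^ 2 = ENNReal.ofReal (∑ s ∈ S, BB s t ^ 2) := by
    rw [ENNReal.ofReal_sum_of_nonneg fun s _ => sq_nonneg _]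
    exact Finset.sum_congr rfl fun s _ => (ENNReal.ofReal_pow (BB_nonneg s t) 2).symm
  rw [e]
  calc _ ≤ ENNReal.ofReal 125 := ENNReal.ofReal_le_ofReal h2
    _ = 125 := by norm_num

/-- ℓ² norm in `ℝ≥0∞`. -/
noncomputable def NN {ι : Type*} (f : ι → ℝ≥0∞) : ℝ≥0∞ := (∑' i, f i ^ 2) ^ (1 / 2 : ℝ)

theorem cs_tsum {ι : Type*} (F G : ι → ℝ≥0∞) : ∑' i, F i * G i ≤ NN F * NN G := by
  rw [ENNReal.tsum_eq_iSup_sum]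
  refine iSup_le fun s => ?_
  refine (ENNReal.inner_le_Lp_mul_Lq s F G Real.HolderConjugate.two_two).trans ?_
  unfold NN
  simp only [ENNReal.rpow_ofNat]
  gcongr <;> exact ENNReal.sum_le_tsum s

theorem NN_mul_le {ι κ : Type*} (Φ : ι → κ → ℝ≥0∞) (G : ι → κ → ℝ≥0∞) :
    ∑' i, ∑' j, Φ i j * G i j ≤
      (∑' i, ∑' j, Φ i j ^ 2) ^ (1 / 2 : ℝ) * (∑' i, ∑' j, G i j ^ 2) ^ (1 / 2 : ℝ) := by
  have h := cs_tsum (fun p : ι × κ => Φ p.1 p.2) (fun p : ι × κ => G p.1 p.2)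
  unfold NN at h
  rw [ENNReal.tsum_prod', ENNReal.tsum_prod', ENNReal.tsum_prod'] at h
  exact h

section Tri

variable {Z : Type*} [AddCommGroup Z]

theorem tsum_shift (k : Z) (φ : Z → ℝ≥0∞) : ∑' l, φ (k + l) = ∑' m, φ m :=
  (Equiv.addLeft k).tsum_eq φ

theorem tsum_shift' (k : Z) (φ : Z → ℝ≥0∞) : ∑' l, φ (l + k) = ∑' m, φ m :=
  (Equiv.addRight k).tsum_eq φ

theorem kernel_sum (B : Z → Z → ℝ≥0∞) (M : ℝ≥0∞) (hB : ∀ t, ∑' s, B s t ^ 2 ≤ M)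
    (h : Z → ℝ≥0∞) : (∑' t, ∑' s, (B s t * h t) ^ 2) ^ (1 / 2 : ℝ) ≤ M ^ (1 / 2 : ℝ) * NN h := by
  unfold NN
  rw [← ENNReal.mul_rpow_of_nonneg _ _ (by norm_num)]
  gcongr
  rw [← ENNReal.tsum_mul_left]
  refine ENNReal.tsum_le_tsum fun t => ?_
  simp only [mul_pow]
  rw [ENNReal.tsum_mul_right]
  gcongr
  exact hB t

theorem NN_prod (f g : Z → ℝ≥0∞) :
    (∑' k, ∑' l, (f k * g l) ^ 2) ^ (1 / 2 : ℝ) = NN f * NN g := by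
  unfold NN
  rw [← ENNReal.mul_rpow_of_nonneg _ _ (by norm_num)]
  simp only [mul_pow, ENNReal.tsum_mul_left, ENNReal.tsum_mul_right]

theorem tri1 (B : Z → Z → ℝ≥0∞) (M : ℝ≥0∞) (hB : ∀ t, ∑' s, B s t ^ 2 ≤ M)
    (f g h : Z → ℝ≥0∞) : ∑' k, ∑' l, B k (k + l) * (f k * g l * h (k + l)) ≤
      M ^ (1 / 2 : ℝ) * (NN f * NN g * NN h) := by
  calc _ = ∑' k, ∑' l, (f k * g l) * (B k (k + l) * h (k + l)) :=
        tsum_congr fun k => tsum_congr fun l => by ring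
    _ ≤ _ := NN_mul_le (fun k l => f k * g l) (fun k l => B k (k + l) * h (k + l))
    _ = NN f * NN g * (∑' t, ∑' s, (B s t * h t) ^ 2) ^ (1 / 2 : ℝ) := by
        rw [NN_prod, ENNReal.tsum_comm (f := fun t s => (B s t * h t) ^ 2)]
        congr 2
        exact tsum_congr fun k => tsum_shift k fun m => (B k m * h m) ^ 2
    _ ≤ NN f * NN g * (M ^ (1 / 2 : ℝ) * NN h) := by
        gcongr
        exact kernel_sum B M hB h
    _ = _ := by ring

theorem tri2 (B : Z → Z → ℝ≥0∞) (M : ℝ≥0∞) (hB : ∀ t, ∑' s, B s t ^ 2 ≤ M)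
    (f g h : Z → ℝ≥0∞) : ∑' k, ∑' l, B l (k + l) * (f k * g l * h (k + l)) ≤
      M ^ (1 / 2 : ℝ) * (NN f * NN g * NN h) := by
  rw [ENNReal.tsum_comm]
  have := tri1 B M hB g f h
  calc _ = ∑' k, ∑' l, B k (k + l) * (g k * f l * h (k + l)) :=
        tsum_congr fun k => tsum_congr fun l => by
          rw [add_comm l k]
          ring
    _ ≤ _ := this
    _ = _ := by ring

theorem tri3 (B : Z → Z → ℝ≥0∞) (M : ℝ≥0∞) (hB : ∀ t, ∑' s, B s t ^ 2 ≤ M)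
    (f g h : Z → ℝ≥0∞) : ∑' k, ∑' l, B (k + l) k * (f k * g l * h (k + l)) ≤
      M ^ (1 / 2 : ℝ) * (NN f * NN g * NN h) := by
  calc _ = ∑' k, ∑' l, (g l * h (k + l)) * (B (k + l) k * f k) :=
        tsum_congr fun k => tsum_congr fun l => by ring
    _ ≤ _ := NN_mul_le (fun k l => g l * h (k + l)) (fun k l => B (k + l) k * f k)
    _ = NN g * NN h * (∑' t, ∑' s, (B s t * f t) ^ 2) ^ (1 / 2 : ℝ) := by
        rw [← NN_prod, ENNReal.tsum_comm (f := fun k l => (g l * h (k + l)) ^ 2)]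
        congr 2
        · exact tsum_congr fun l => tsum_shift' l fun m => (g l * h m) ^ 2
        · exact tsum_congr fun k => tsum_shift k fun m => (B m k * f k) ^ 2
    _ ≤ NN g * NN h * (M ^ (1 / 2 : ℝ) * NN f) := by
        gcongr
        exact kernel_sum B M hB f
    _ = _ := by ring

end Tri

theorem trilinear (f g h f' g' h' : (Fin 3 → ℤ) → ℝ≥0∞)
    (hf : ∀ k, f k ≤ ENNReal.ofReal (HH (nn k) ^ 2) * f' k)
    (hg : ∀ k, g k ≤ ENNReal.ofReal (HH (nn k)) * g' k)
    (hh : ∀ k, h k ≤ ENNReal.ofReal (HH (nn k)) * h' k) :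
    ∑' k, ∑' l, f k * g l * h (k + l) ≤
      2 * (3 * (125 ^ (1 / 2 : ℝ) * (NN f' * NN g' * NN h'))) := by
  let B : (Fin 3 → ℤ) → (Fin 3 → ℤ) → ℝ≥0∞ := fun s t => ENNReal.ofReal (BB s t)
  have hB : ∀ t, ∑' s, B s t ^ 2 ≤ 125 := sum_BB
  have p : ∀ k l, f k * g l * h (k + l) ≤
      2 * (B k (k + l) * (f' k * g' l * h' (k + l)) + B l (k + l) * (f' k * g' l * h' (k + l))
        + B (k + l) k * (f' k * g' l * h' (k + l))) := by
    intro k l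
    calc f k * g l * h (k + l) ≤ (ENNReal.ofReal (HH (nn k) ^ 2) * f' k) *
          (ENNReal.ofReal (HH (nn l)) * g' l) * (ENNReal.ofReal (HH (nn (k + l))) * h' (k + l)) := by
          gcongr
          · exact hf k
          · exact hg l
          · exact hh (k + l)
      _ = ENNReal.ofReal (HH (nn k) ^ 2 * HH (nn l) * HH (nn (k + l))) *
          (f' k * g' l * h' (k + l)) := by
          rw [ENNReal.ofReal_mul (mul_nonneg (sq_nonneg _) (HH_nonneg _)),
            ENNReal.ofReal_mul (sq_nonneg _)]
          ring
      _ ≤ ENNReal.ofReal (2 * (BB k (k + l) + BB l (k + l) + BB (k + l) k)) *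
          (f' k * g' l * h' (k + l)) := by
          exact mul_le_mul' (ENNReal.ofReal_le_ofReal (kernel_le k l)) le_rfl
      _ = _ := by
          have b1 := BB_nonneg k (k + l)
          have b2 := BB_nonneg l (k + l)
          have b3 := BB_nonneg (k + l) k
          rw [ENNReal.ofReal_mul (by norm_num), ENNReal.ofReal_add (by positivity) b3,
            ENNReal.ofReal_add b1 b2, ENNReal.ofReal_ofNat]
          simp only [B]
          ring
  calc _ ≤ ∑' k, ∑' l, 2 * (B k (k + l) * (f' k * g' l * h' (k + l)) +
        B l (k + l) * (f' k * g' l * h' (k + l)) + B (k + l) k * (f' k * g' l * h' (k + l))) :=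
        ENNReal.tsum_le_tsum fun k => ENNReal.tsum_le_tsum fun l => p k l
    _ = 2 * (∑' k, ∑' l, B k (k + l) * (f' k * g' l * h' (k + l)) +
        ∑' k, ∑' l, B l (k + l) * (f' k * g' l * h' (k + l)) +
        ∑' k, ∑' l, B (k + l) k * (f' k * g' l * h' (k + l))) := by
        simp only [ENNReal.tsum_mul_left, ENNReal.tsum_add]
    _ ≤ 2 * (125 ^ (1 / 2 : ℝ) * (NN f' * NN g' * NN h') +
        125 ^ (1 / 2 : ℝ) * (NN f' * NN g' * NN h') +
        125 ^ (1 / 2 : ℝ) * (NN f' * NN g' * NN h')) := by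
        gcongr
        · exact tri1 B 125 hB f' g' h'
        · exact tri2 B 125 hB f' g' h'
        · exact tri3 B 125 hB f' g' h'
    _ = _ := by ring

end Combinatorics

section Final

open scoped ENNReal

theorem specWeight_eq (s : ℝ) (k : Fin 3 → ℤ) : specWeight s k = WW k ^ s := rfl

theorem WW_nonneg (k : Fin 3 → ℤ) : 0 ≤ WW k := by
  unfold WW
  positivity

theorem nn_sq_le_WW (k : Fin 3 → ℤ) : (nn k : ℝ) ^ 2 ≤ WW k := by
  obtain ⟨i, hi⟩ := exists_nn k
  have h1 : (nn k : ℝ) ^ 2 = (k i : ℝ) ^ 2 := by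
    rw [hi, Nat.cast_natAbs, Int.cast_abs, sq_abs]
  have h2 : (k i : ℝ) ^ 2 ≤ ∑ j, (k j : ℝ) ^ 2 :=
    Finset.single_le_sum (f := fun j => (k j : ℝ) ^ 2) (fun j _ => sq_nonneg _) (Finset.mem_univ i)
  have h3 : (1 : ℝ) ≤ (2 * Real.pi) ^ 2 := by nlinarith [Real.pi_gt_three]
  have h4 : 0 ≤ ∑ j, (k j : ℝ) ^ 2 := (sq_nonneg _).trans h2
  rw [h1]
  unfold WW
  nlinarith

theorem one_le_nn {k : Fin 3 → ℤ} (hk : k ≠ 0) : (1 : ℝ) ≤ nn k := by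
  have : nn k ≠ 0 := fun h => hk (nn_eq_zero h)
  exact_mod_cast Nat.one_le_iff_ne_zero.2 this

theorem one_le_WW {k : Fin 3 → ℤ} (hk : k ≠ 0) : 1 ≤ WW k := by
  have := nn_sq_le_WW k
  nlinarith [one_le_nn hk]

theorem WW_zero : WW 0 = 0 := by simp [WW]

theorem one_le_HH_mul {k : Fin 3 → ℤ} (hk : k ≠ 0) {r : ℝ} (hr : 3 / 8 ≤ r) :
    1 ≤ HH (nn k) * specWeight (r / 2) k := by
  have h1 := one_le_nn hk
  have h0 : (0 : ℝ) < nn k := by linarith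
  have h2 : (nn k : ℝ) ^ (3 / 8 : ℝ) ≤ specWeight (r / 2) k := by
    rw [specWeight_eq]
    calc (nn k : ℝ) ^ (3 / 8 : ℝ) ≤ (nn k : ℝ) ^ r := Real.rpow_le_rpow_of_exponent_le h1 hr
      _ = ((nn k : ℝ) ^ 2) ^ (r / 2) := by
          rw [← Real.rpow_natCast_mul h0.le]
          congr 1
          push_cast
          ring
      _ ≤ WW k ^ (r / 2) := Real.rpow_le_rpow (by positivity) (nn_sq_le_WW k) (by linarith)
  unfold HH
  rw [Real.rpow_neg h0.le]
  have : (0 : ℝ) < (nn k : ℝ) ^ (3 / 8 : ℝ) := by positivity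
  rw [inv_mul_eq_div, one_le_div this]
  exact h2

theorem spec_sq (s : ℝ) (k : Fin 3 → ℤ) : specWeight (s / 2) k ^ 2 = specWeight s k := by
  rw [specWeight_eq, specWeight_eq, ← Real.rpow_mul_natCast (WW_nonneg k)]
  norm_num

theorem spec_nonneg (s : ℝ) (k : Fin 3 → ℤ) : 0 ≤ specWeight s k := by
  rw [specWeight_eq]
  exact Real.rpow_nonneg (WW_nonneg k) s

/-- Complexified component. -/
def cpt (u : (Fin 3 → ℝ) → (Fin 3 → ℝ)) (j : Fin 3) : (Fin 3 → ℝ) → ℂ := fun x => (u x j : ℂ)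

theorem fc_eq (u : (Fin 3 → ℝ) → (Fin 3 → ℝ)) (k : Fin 3 → ℤ) (j : Fin 3) :
    fourierCoeffVF u k j = sfc (cpt u j) k := rfl

theorem cpt_contDiff {u : (Fin 3 → ℝ) → (Fin 3 → ℝ)} (hu : IsSmoothTorusVF u) (j : Fin 3) :
    ContDiff ℝ 2 (cpt u j) := by
  have h : ContDiff ℝ 2 u := contDiff_infty.1 hu.1 2
  exact Complex.ofRealCLM.contDiff.comp ((contDiff_apply ℝ ℝ j).comp h)

theorem cpt_perC {u : (Fin 3 → ℝ) → (Fin 3 → ℝ)} (hu : IsSmoothTorusVF u) (j : Fin 3) :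
    PerC (cpt u j) := by
  intro x m
  simp only [cpt, hu.2.1 x m]

theorem cpt_fderiv {u : (Fin 3 → ℝ) → (Fin 3 → ℝ)} (hu : IsSmoothTorusVF u) (j : Fin 3)
    (x e : Fin 3 → ℝ) : fderiv ℝ (cpt u j) x e = ((fderiv ℝ u x e j : ℝ) : ℂ) := by
  have h : HasFDerivAt u (fderiv ℝ u x) x :=
    (hu.1.differentiable (by simp) x).hasFDerivAt
  have h2 := ((Complex.ofRealCLM.comp (ContinuousLinearMap.proj (R := ℝ)
    (φ := fun _ : Fin 3 => ℝ) j)).hasFDerivAt (x := u x)).comp x h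
  have h3 : HasFDerivAt (cpt u j) _ x := h2
  rw [h3.fderiv]
  simp

theorem fc_zero {u : (Fin 3 → ℝ) → (Fin 3 → ℝ)} (hu : IsSmoothTorusVF u) (j : Fin 3) :
    fourierCoeffVF u 0 j = 0 := by
  have h := hu.2.2
  unfold IsMeanFree at h
  have h2 : ∫ x in Set.Icc (0 : Fin 3 → ℝ) 1, u x j = 0 := by
    have hi : IntegrableOn u (Set.Icc (0 : Fin 3 → ℝ) 1) :=
      hu.1.continuous.continuousOn.integrableOn_compact isCompact_Icc
    have := (ContinuousLinearMap.proj (R := ℝ) (φ := fun _ : Fin 3 => ℝ) j).integral_comp_comm hi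
    rw [h] at this
    simpa using this
  have h3 : fourierCoeffVF u 0 j = ((∫ x in Set.Icc (0 : Fin 3 → ℝ) 1, u x j : ℝ) : ℂ) := by
    rw [← integral_complex_ofReal]
    simp [fourierCoeffVF]
  rw [h3, h2]
  simp

theorem NN_le_hsNorm {u : (Fin 3 → ℝ) → (Fin 3 → ℝ)} (hu : IsSmoothTorusVF u) (j : Fin 3)
    {s : ℝ} (hs0 : 0 < s) (hs2 : s ≤ 2) :
    NN (fun k => ENNReal.ofReal (specWeight (s / 2) k * ‖fourierCoeffVF u k j‖)) ≤
      ENNReal.ofReal (hsNorm s u) := by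
  have z : specWeight s 0 = 0 := by
    rw [specWeight_eq, WW_zero, Real.zero_rpow hs0.ne']
  have fcn : ∀ k, fcNormSq u k = ∑ i, ‖sfc (cpt u i) k‖ ^ 2 := by
    intro k
    unfold fcNormSq
    simp only [fc_eq, Complex.normSq_eq_norm_sq]
  have hsum : Summable fun k => specWeight s k * fcNormSq u k := by
    have h1 := summable_sum (s := Finset.univ) fun i _ =>
      summable_WW (cpt u i) (cpt_contDiff hu i) (cpt_perC hu i)
    refine Summable.of_nonneg_of_le (fun k => ?_) (fun k => ?_) h1
    · exact mul_nonneg (spec_nonneg s k) (by rw [fcn]; positivity)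
    · rw [← Finset.mul_sum, fcn]
      gcongr
      by_cases hk : k = 0
      · rw [hk, z]
        positivity
      · rw [specWeight_eq, ← Real.rpow_natCast]
        exact Real.rpow_le_rpow_of_exponent_le (one_le_WW hk) (by exact_mod_cast hs2)
  have e : (fun k => if k = 0 then 0 else specWeight s k * fcNormSq u k)
      = fun k => specWeight s k * fcNormSq u k := by
    ext k
    split_ifs with h
    · rw [h, z, zero_mul]
    · rfl
  have nonneg : ∀ k, 0 ≤ specWeight s k * fcNormSq u k := fun k =>
    mul_nonneg (spec_nonneg s k) (by rw [fcn]; positivity)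
  unfold NN hsNorm
  rw [e, Real.sqrt_eq_rpow, ← ENNReal.ofReal_rpow_of_nonneg (tsum_nonneg nonneg) (by norm_num),
    ENNReal.ofReal_tsum_of_nonneg nonneg hsum]
  gcongr with k
  rw [← ENNReal.ofReal_pow (mul_nonneg (spec_nonneg _ _) (norm_nonneg _))]
  apply ENNReal.ofReal_le_ofReal
  rw [mul_pow, spec_sq, fcn, fc_eq]
  have := spec_nonneg s k
  gcongr
  exact Finset.single_le_sum (f := fun i => ‖sfc (cpt u i) k‖ ^ 2) (fun _ _ => by positivity)
    (Finset.mem_univ j)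

theorem fc_bound {u : (Fin 3 → ℝ) → (Fin 3 → ℝ)} (hu : IsSmoothTorusVF u) (j : Fin 3)
    {r : ℝ} (hr : 3 / 8 ≤ r) (k : Fin 3 → ℤ) :
    ‖fourierCoeffVF u k j‖ₑ ≤ ENNReal.ofReal (HH (nn k)) *
      ENNReal.ofReal (specWeight (r / 2) k * ‖fourierCoeffVF u k j‖) := by
  by_cases hk : k = 0
  · rw [hk, fc_zero hu]
    simp
  · rw [← ENNReal.ofReal_mul (HH_nonneg _), ← ofReal_norm]
    apply ENNReal.ofReal_le_ofReal
    rw [← mul_assoc]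
    exact le_mul_of_one_le_left (norm_nonneg _) (one_le_HH_mul hk hr)

theorem mult_bound (r α : ℝ) (hr : 3 / 8 ≤ r) (hα : 0 < α) (i : Fin 3) (k : Fin 3 → ℤ) (y z : ℂ)
    (hyz : z = (((1 + α ^ (2 * r) * specWeight r k : ℝ) : ℂ))⁻¹ * y) :
    ‖2 * Real.pi * Complex.I * k i * z‖ₑ ≤ ENNReal.ofReal (HH (nn k) ^ 2) *
      (ENNReal.ofReal (α ^ (-(2 * r))) * ENNReal.ofReal (specWeight (1 / 2) k * ‖y‖)) := by
  by_cases hk : k = 0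
  · simp [hk]
  have hA : 0 < α ^ (2 * r) := by positivity
  have hW : 0 < WW k := by linarith [one_le_WW hk]
  have hS : 0 < specWeight r k := by
    rw [specWeight_eq]
    positivity
  rw [← ENNReal.ofReal_mul (by positivity), ← ENNReal.ofReal_mul (by positivity), ← ofReal_norm]
  apply ENNReal.ofReal_le_ofReal
  have n1 : ‖(2 * Real.pi * Complex.I * k i : ℂ)‖ ≤ specWeight (1 / 2) k := by
    simp only [norm_mul, Complex.norm_real, Complex.norm_I, Complex.norm_intCast,
      Complex.norm_ofNat, Real.norm_eq_abs, mul_one, abs_of_pos Real.pi_pos]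
    rw [specWeight_eq, ← Real.sqrt_eq_rpow]
    apply Real.le_sqrt_of_sq_le
    rw [mul_pow, sq_abs, WW]
    gcongr
    exact Finset.single_le_sum (f := fun j => (k j : ℝ) ^ 2) (fun j _ => sq_nonneg _)
      (Finset.mem_univ i)
  have n2 : ‖z‖ = (1 + α ^ (2 * r) * specWeight r k)⁻¹ * ‖y‖ := by
    rw [hyz, norm_mul, norm_inv, Complex.norm_real, Real.norm_eq_abs, abs_of_pos (by positivity)]
  have n3 : (1 + α ^ (2 * r) * specWeight r k)⁻¹ ≤ α ^ (-(2 * r)) * HH (nn k) ^ 2 := by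
    rw [Real.rpow_neg hα.le]
    have h1 := one_le_HH_mul hk hr
    have h2 : 1 ≤ HH (nn k) ^ 2 * specWeight r k := by
      rw [← spec_sq, ← mul_pow]
      exact one_le_pow₀ h1
    calc (1 + α ^ (2 * r) * specWeight r k)⁻¹ ≤ (α ^ (2 * r) * specWeight r k)⁻¹ := by
          gcongr
          linarith
      _ = (α ^ (2 * r))⁻¹ * (specWeight r k)⁻¹ := mul_inv _ _
      _ ≤ _ := by
          gcongr
          rw [inv_le_iff_one_le_mul₀ hS]
          exact h2
  rw [norm_mul, n2]
  calc _ ≤ specWeight (1 / 2) k * (α ^ (-(2 * r)) * HH (nn k) ^ 2 * ‖y‖) := by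
        have := spec_nonneg (1 / 2) k
        gcongr
    _ = _ := by ring

theorem NN_const_mul {ι : Type*} (c : ℝ≥0∞) (f : ι → ℝ≥0∞) : NN (fun k => c * f k) = c * NN f := by
  unfold NN
  simp only [mul_pow, ENNReal.tsum_mul_left]
  rw [ENNReal.mul_rpow_of_nonneg _ _ (by norm_num), ← ENNReal.rpow_natCast, ← ENNReal.rpow_mul]
  norm_num

end Final

theorem bform_inverse_helmholtz_estimate :
    ∀ r : ℝ, 3/8 ≤ r → r ≤ 3/2 →
    ∀ α : ℝ, 0 < α →
    ∃ C : ℝ, 0 < C ∧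
      ∀ u v w : (Fin 3 → ℝ) → (Fin 3 → ℝ),
        IsSmoothTorusVF u → IsDivFree u →
        IsSmoothTorusVF v →
        IsSmoothTorusVF w →
        -- `w = (I + α^{2r} A^r)⁻¹ v`, i.e. `ŵ(k) = (1 + α^{2r}|2πk|^{2r})⁻¹ v̂(k)` for all `k`
        (∀ k : Fin 3 → ℤ, ∀ j : Fin 3,
          fourierCoeffVF w k j
            = (((1 + α ^ (2*r) * specWeight r k : ℝ) : ℂ))⁻¹ * fourierCoeffVF v k j) →
        |bform u w u| ≤ C * (hsNorm r u) ^ 2 * hsNorm 1 v := by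
  intro r hr1 hr2 α hα
  have hAp : 0 < α ^ (-(2 * r)) := by positivity
  let K : ℝ := 6 * (125 : ℝ) ^ (1 / 2 : ℝ) * α ^ (-(2 * r))
  have hK : 0 < K := by positivity
  refine ⟨9 * K, by positivity, ?_⟩
  intro u v w hu _ hv hw hvw
  have hn0 : 0 ≤ hsNorm r u := Real.sqrt_nonneg _
  have hn1 : 0 ≤ hsNorm 1 v := Real.sqrt_nonneg _
  have main : ∀ i j : Fin 3, |∫ x in Set.Icc (0 : Fin 3 → ℝ) 1,
      u x i * fderiv ℝ w x (Pi.single i 1) j * u x j| ≤ K * (hsNorm r u) ^ 2 * hsNorm 1 v := by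
    intro i j
    have cw : Continuous fun x => fderiv ℝ w x (Pi.single i 1) j :=
      (continuous_apply j).comp
        ((hw.1.continuous_fderiv (by simp)).clm_apply continuous_const)
    have eqw : (fun x => ((fderiv ℝ w x (Pi.single i 1) j : ℝ) : ℂ))
        = fun x => fderiv ℝ (cpt w j) x (Pi.single i 1) := by
      ext x
      rw [cpt_fderiv hw]
    have h1 := enorm_integral_triple_le (fun x => fderiv ℝ w x (Pi.single i 1) j)
      (fun x => u x i) (fun x => u x j) cw ((continuous_apply i).comp hu.1.continuous)
      ((continuous_apply j).comp hu.1.continuous)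
      (by
        rw [eqw]
        exact (cpt_perC hw j).fderiv _)
      (cpt_perC hu i) (cpt_perC hu j)
    rw [eqw] at h1
    have h2 := trilinear (fun k => ‖sfc (fun x => fderiv ℝ (cpt w j) x (Pi.single i 1)) k‖ₑ)
      (fun k => ‖fourierCoeffVF u k i‖ₑ) (fun k => ‖fourierCoeffVF u k j‖ₑ)
      (fun k => ENNReal.ofReal (α ^ (-(2 * r))) *
        ENNReal.ofReal (specWeight (1 / 2) k * ‖fourierCoeffVF v k j‖))
      (fun k => ENNReal.ofReal (specWeight (r / 2) k * ‖fourierCoeffVF u k i‖))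
      (fun k => ENNReal.ofReal (specWeight (r / 2) k * ‖fourierCoeffVF u k j‖))
      (fun k => by
        simp only [sfc_fderiv (cpt w j) ((cpt_contDiff hw j).of_le (by norm_num)) (cpt_perC hw j)]
        exact mult_bound r α hr1 hα i k _ _ (hvw k j))
      (fun k => fc_bound hu i hr1 k) (fun k => fc_bound hu j hr1 k)
    have h3 := h1.trans h2
    rw [NN_const_mul] at h3
    have h4 : ‖∫ x in Set.Icc (0 : Fin 3 → ℝ) 1,
        u x i * fderiv ℝ w x (Pi.single i 1) j * u x j‖ₑ ≤
        2 * (3 * (125 ^ (1 / 2 : ℝ) * (ENNReal.ofReal (α ^ (-(2 * r))) *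
          ENNReal.ofReal (hsNorm 1 v) * ENNReal.ofReal (hsNorm r u) *
          ENNReal.ofReal (hsNorm r u)))) := by
      refine h3.trans ?_
      have a1 := NN_le_hsNorm hv j (s := 1) (by norm_num) (by norm_num)
      have a2 := NN_le_hsNorm hu i (s := r) (by linarith) (by linarith)
      have a3 := NN_le_hsNorm hu j (s := r) (by linarith) (by linarith)
      gcongr
    have h5 : (2 * (3 * (125 ^ (1 / 2 : ℝ) * (ENNReal.ofReal (α ^ (-(2 * r))) *
          ENNReal.ofReal (hsNorm 1 v) * ENNReal.ofReal (hsNorm r u) *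
          ENNReal.ofReal (hsNorm r u)))) : ENNReal)
        = ENNReal.ofReal (K * (hsNorm r u) ^ 2 * hsNorm 1 v) := by
      have e125 : (125 : ENNReal) ^ (1 / 2 : ℝ) = ENNReal.ofReal ((125 : ℝ) ^ (1 / 2 : ℝ)) := by
        rw [← ENNReal.ofReal_rpow_of_nonneg (by norm_num) (by norm_num), ENNReal.ofReal_ofNat]
      have e2 : (2 : ENNReal) = ENNReal.ofReal 2 := (ENNReal.ofReal_ofNat 2).symm
      have e3 : (3 : ENNReal) = ENNReal.ofReal 3 := (ENNReal.ofReal_ofNat 3).symm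
      rw [e125, e2, e3, ← ENNReal.ofReal_mul (by positivity), ← ENNReal.ofReal_mul (by positivity),
        ← ENNReal.ofReal_mul (by positivity), ← ENNReal.ofReal_mul (by positivity),
        ← ENNReal.ofReal_mul (by positivity), ← ENNReal.ofReal_mul (by positivity)]
      congr 1
      simp only [K]
      ring
    rw [h5, ← ofReal_norm, ENNReal.ofReal_le_ofReal_iff (by positivity), Real.norm_eq_abs] at h4
    exact h4
  unfold bform
  calc _ ≤ ∑ i : Fin 3, ∑ j : Fin 3, |∫ x in Set.Icc (0 : Fin 3 → ℝ) 1,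
      u x i * fderiv ℝ w x (Pi.single i 1) j * u x j| :=
        (Finset.abs_sum_le_sum_abs _ _).trans
          (Finset.sum_le_sum fun i _ => Finset.abs_sum_le_sum_abs _ _)
    _ ≤ ∑ i : Fin 3, ∑ j : Fin 3, K * (hsNorm r u) ^ 2 * hsNorm 1 v :=
        Finset.sum_le_sum fun i _ => Finset.sum_le_sum fun j _ => main i j
    _ = _ := by
        simp
        ring
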